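/- arXiv:1912.01823 — 2 statements merged into one kernel-verified Lean document; each statement's English description precedes it below -/
import Mathlib

section
/- Let (Ω, P) be a probability space, C > 0, δ ≥ 0, β₂ ∈ (0,1), ε ≥ 0, and p = (1+δ)/(C+1) ∈ [0,1]. Let W : Ω → [0,1] and V : Ω → [0,∞) be random variables with E[V] ≤ (1+δ)·C², and let B : Ω → {0,1} be Bernoulli(p), independent of the pair (W, V). Define the stochastic gradient g = C·W on {B=1} and g = −1 on {B=0}. Then E[−g/(√(β₂·V + (1−β₂)·g²) + ε)] ≥ −p/√(1−β₂) + (1−p)/(√(β₂·(1+δ)·C² + (1−β₂)) + ε). -/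
open MeasureTheory ProbabilityTheory


lemma adam_tangent (β m v ε : ℝ) (hβ0 : 0 < β) (hβ1 : β < 1) (hm : 0 ≤ m) (hv : 0 ≤ v)
    (hε : 0 ≤ ε) (a : ℝ) (ha : a = Real.sqrt (β * m + (1 - β))) :
    1 / (a + ε) - β / (2 * a * (a + ε) ^ 2) * (v - m) ≤
      1 / (Real.sqrt (β * v + (1 - β)) + ε) := by
  have hm' : 0 < β * m + (1 - β) := by nlinarith [mul_nonneg hβ0.le hm]
  have hv' : 0 < β * v + (1 - β) := by nlinarith [mul_nonneg hβ0.le hv]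
  have ha0 : 0 < a := ha ▸ Real.sqrt_pos.2 hm'
  have ha2 : a ^ 2 = β * m + (1 - β) := by rw [ha]; exact Real.sq_sqrt hm'.le
  obtain ⟨s, hs⟩ : ∃ s, s = Real.sqrt (β * v + (1 - β)) := ⟨_, rfl⟩
  have hs0 : 0 < s := hs ▸ Real.sqrt_pos.2 hv'
  have hs2 : s ^ 2 = β * v + (1 - β) := by rw [hs]; exact Real.sq_sqrt hv'.le
  rw [← hs]
  have e1 : β / (2 * a * (a + ε) ^ 2) * (v - m) = (s ^ 2 - a ^ 2) / (2 * a * (a + ε) ^ 2) := by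
    rw [hs2, ha2]; ring
  have hae : 0 < a + ε := by linarith
  have hse : 0 < s + ε := by linarith
  have h1 : (s - a) / (a + ε) ^ 2 ≤ (s ^ 2 - a ^ 2) / (2 * a * (a + ε) ^ 2) := by
    have : (s ^ 2 - a ^ 2) / (2 * a * (a + ε) ^ 2) - (s - a) / (a + ε) ^ 2
        = (s - a) ^ 2 / (2 * a * (a + ε) ^ 2) := by field_simp; ring
    have : 0 ≤ (s - a) ^ 2 / (2 * a * (a + ε) ^ 2) := by positivity
    linarith
  have h2 : 1 / (a + ε) - (s - a) / (a + ε) ^ 2 ≤ 1 / (s + ε) := by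
    have : 1 / (s + ε) - (1 / (a + ε) - (s - a) / (a + ε) ^ 2)
        = (s - a) ^ 2 / ((s + ε) * (a + ε) ^ 2) := by field_simp; ring
    have : 0 ≤ (s - a) ^ 2 / ((s + ε) * (a + ε) ^ 2) := by positivity
    linarith
  rw [e1]; linarith

lemma adam_ratio (β v x ε : ℝ) (hβ0 : 0 < β) (hβ1 : β < 1) (hv : 0 ≤ v) (hε : 0 ≤ ε) :
    |-x / (Real.sqrt (β * v + (1 - β) * x ^ 2) + ε)| ≤ 1 / Real.sqrt (1 - β) := by
  have hb : 0 < Real.sqrt (1 - β) := Real.sqrt_pos.2 (by linarith)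
  have h1 : Real.sqrt (1 - β) * |x| ≤ Real.sqrt (β * v + (1 - β) * x ^ 2) := by
    rw [← Real.sqrt_sq_eq_abs, ← Real.sqrt_mul (by linarith)]
    exact Real.sqrt_le_sqrt (by nlinarith [mul_nonneg hβ0.le hv])
  have h0 := Real.sqrt_nonneg (β * v + (1 - β) * x ^ 2)
  rw [abs_div, abs_neg, abs_of_nonneg (a := _ + ε) (by linarith)]
  rcases eq_or_lt_of_le (add_nonneg h0 hε) with h | h
  · rw [← h]; simp
  · rw [div_le_div_iff₀ h hb]; linarith

/-- Expected one-step drift bound at the heart of the proof of the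
paper's Theorem 1: with `W : Ω → [0,1]` the current iterate, `V : Ω → [0,∞)` the
second-moment accumulator with `E[V] ≤ (1+δ)·C²`, `B` Bernoulli(`p`) independent of
`(W, V)` where `p = (1+δ)/(C+1)`, and stochastic gradient `g = C·W` on `{B=1}`,
`g = −1` on `{B=0}`,
`E[−g/(√(β₂·V + (1−β₂)·g²) + ε)] ≥ −p/√(1−β₂) + (1−p)/(√(β₂·(1+δ)·C² + (1−β₂)) + ε)`. -/
theorem adam_expected_drift_bound
    {Ω : Type*} [MeasurableSpace Ω] (P : Measure Ω) [IsProbabilityMeasure P]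
    (C δ β₂ ε p : ℝ) (hC : 0 < C) (hδ : 0 ≤ δ) (hβ₂ : β₂ ∈ Set.Ioo (0 : ℝ) 1)
    (hε : 0 ≤ ε) (hp : p = (1 + δ) / (C + 1)) (hp01 : p ∈ Set.Icc (0 : ℝ) 1)
    (W V : Ω → ℝ) (hWmeas : Measurable W) (hVmeas : Measurable V)
    (hW : ∀ ω, W ω ∈ Set.Icc (0 : ℝ) 1) (hVnn : ∀ ω, 0 ≤ V ω)
    (hVint : Integrable V P) (hVmean : (∫ ω, V ω ∂P) ≤ (1 + δ) * C ^ 2)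
    (B : Ω → Bool) (hBmeas : Measurable B)
    (hB : P {ω | B ω = true} = ENNReal.ofReal p)
    (hindep : IndepFun B (fun ω => (W ω, V ω)) P)
    (g : Ω → ℝ) (hg : ∀ ω, g ω = if B ω then C * W ω else -1) :
    -p / Real.sqrt (1 - β₂) +
        (1 - p) / (Real.sqrt (β₂ * (1 + δ) * C ^ 2 + (1 - β₂)) + ε) ≤
      ∫ ω, -g ω / (Real.sqrt (β₂ * V ω + (1 - β₂) * g ω ^ 2) + ε) ∂P := by
  obtain ⟨hβ0, hβ1⟩ := hβ₂
  obtain ⟨m, hm⟩ : ∃ m, m = (1 + δ) * C ^ 2 := ⟨_, rfl⟩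
  have hm0 : 0 ≤ m := by rw [hm]; positivity
  rw [← hm] at hVmean
  rw [mul_assoc β₂, ← hm]
  obtain ⟨a, ha⟩ : ∃ a, a = Real.sqrt (β₂ * m + (1 - β₂)) := ⟨_, rfl⟩
  have ha0 : 0 ≤ a := ha ▸ Real.sqrt_nonneg _
  rw [← ha]
  obtain ⟨k, hk⟩ : ∃ k, k = β₂ / (2 * a * (a + ε) ^ 2) := ⟨_, rfl⟩
  have hk0 : 0 ≤ k := by rw [hk]; positivity
  have htan : ∀ ω, 1 / (a + ε) - k * (V ω - m) ≤
      1 / (Real.sqrt (β₂ * V ω + (1 - β₂)) + ε) := fun ω => by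
    rw [hk]; exact adam_tangent β₂ m (V ω) ε hβ0 hβ1 hm0 (hVnn ω) hε a ha
  have hgm : Measurable g := by
    have : g = fun ω => if B ω = true then C * W ω else -1 := funext hg
    rw [this]
    exact Measurable.ite (hBmeas (measurableSet_singleton true))
      (hWmeas.const_mul C) measurable_const
  have hLint : Integrable
      (fun ω => -g ω / (Real.sqrt (β₂ * V ω + (1 - β₂) * g ω ^ 2) + ε)) P := by
    refine Integrable.of_bound (C := 1 / Real.sqrt (1 - β₂)) ?_ ?_
    · exact Measurable.aestronglyMeasurable (by fun_prop)
    · exact Filter.Eventually.of_forall fun ω =>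
        adam_ratio β₂ (V ω) (g ω) ε hβ0 hβ1 (hVnn ω) hε
  let f : Bool → ℝ := fun b => if b then 0 else 1
  have hf : Measurable f := measurable_from_top
  let I : Ω → ℝ := fun ω => f (B ω)
  have hIm : Measurable I := hf.comp hBmeas
  have hIV : IndepFun I V P := hindep.comp hf measurable_snd
  have hIint : Integrable I P := by
    refine Integrable.of_bound (C := 1) hIm.aestronglyMeasurable ?_
    refine Filter.Eventually.of_forall fun ω => ?_
    simp only [I, f]; split_ifs <;> simp
  have hIE : ∫ ω, I ω ∂P = 1 - p := by
    have hS : MeasurableSet {ω | B ω = true} := hBmeas (measurableSet_singleton true)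
    have : I = fun ω => 1 - ({ω | B ω = true}.indicator (fun _ => (1 : ℝ))) ω := by
      funext ω
      by_cases h : B ω = true <;> simp [I, f, h]
    rw [this, integral_sub (integrable_const _) ((integrable_const _).indicator hS),
      integral_indicator hS]
    simp [Measure.real, hB, ENNReal.toReal_ofReal hp01.1]
  have hIVint : Integrable (fun ω => I ω * V ω) P := hIV.integrable_mul hIint hVint
  have hIVE : ∫ ω, I ω * V ω ∂P = (1 - p) * ∫ ω, V ω ∂P := by
    rw [← hIE]
    exact hIV.integral_fun_mul_eq_mul_integral hIm.aestronglyMeasurable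
      hVmeas.aestronglyMeasurable
  obtain ⟨r, hr⟩ : ∃ r, r = 1 / Real.sqrt (1 - β₂) := ⟨_, rfl⟩
  have hle : ∫ ω, ((-r + I ω * (r + 1 / (a + ε) + k * m)) - k * (I ω * V ω)) ∂P ≤
      ∫ ω, -g ω / (Real.sqrt (β₂ * V ω + (1 - β₂) * g ω ^ 2) + ε) ∂P := by
    refine integral_mono (((integrable_const _).add (hIint.mul_const _)).sub
      (hIVint.const_mul k)) hLint fun ω => ?_
    have h1 := (abs_le.1 (adam_ratio β₂ (V ω) (g ω) ε hβ0 hβ1 (hVnn ω) hε)).1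
    rw [← hr] at h1
    by_cases h : B ω = true
    · have : I ω = 0 := by simp [I, f, h]
      simp only [this]
      linarith
    · have : I ω = 1 := by simp [I, f, h]
      have hgω : g ω = -1 := by rw [hg]; simp [h]
      simp only [this, hgω]
      have h2 := htan ω
      norm_num at h2 ⊢
      linarith
  refine le_trans ?_ hle
  have hAint : Integrable (fun ω => -r + I ω * (r + 1 / (a + ε) + k * m)) P :=
    (integrable_const _).add (hIint.mul_const _)
  rw [integral_sub hAint (hIVint.const_mul k),
    integral_add (integrable_const _) (hIint.mul_const _), integral_mul_const,
    integral_const_mul, hIE, hIVE]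
  simp only [integral_const, probReal_univ, one_smul]
  have e : -p / Real.sqrt (1 - β₂) + (1 - p) / (a + ε) = -p * r + (1 - p) * (1 / (a + ε)) := by
    rw [hr]; ring
  rw [e]
  have := mul_nonneg (mul_nonneg hk0 (sub_nonneg.2 hp01.2)) (sub_nonneg.2 hVmean)
  nlinarith
end

section
/- For every β₂ ∈ [0,1), ε ≥ 0, and δ ≥ 0, there exists C₀ > 1 + δ such that for all C ≥ C₀, setting p = (1+δ)/(C+1), the following inequality holds: −p/√(1−β₂) + (1−p)/(√(β₂·(1+δ)·C + (1−β₂)) + ε) ≥ 0. -/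
/-- Final step in the proof of the paper's Theorem 1: for every
`β₂ ∈ [0,1)`, `ε ≥ 0`, `δ ≥ 0`, there exists `C₀ > 1 + δ` such that for all
`C ≥ C₀`, with `p = (1+δ)/(C+1)`,
`−p/√(1−β₂) + (1−p)/(√(β₂·(1+δ)·C + (1−β₂)) + ε) ≥ 0`. -/
theorem adam_drift_nonneg_for_large_C
    (β₂ ε δ : ℝ) (hβ₂ : β₂ ∈ Set.Ico (0 : ℝ) 1) (hε : 0 ≤ ε) (hδ : 0 ≤ δ) :
    ∃ C₀ : ℝ, 1 + δ < C₀ ∧ ∀ C, C₀ ≤ C →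
      0 ≤ -((1 + δ) / (C + 1)) / Real.sqrt (1 - β₂) +
          (1 - (1 + δ) / (C + 1)) /
            (Real.sqrt (β₂ * (1 + δ) * C + (1 - β₂)) + ε) := by
  obtain ⟨hb0, hb1⟩ := hβ₂
  have hs : 0 < Real.sqrt (1 - β₂) := Real.sqrt_pos.mpr (by linarith)
  set s := Real.sqrt (1 - β₂) with hsdef
  set K : ℝ := 2 * (1 + δ) * (2 * (1 + δ) + ε) / s with hK
  have hK0 : 0 ≤ K := by positivity
  refine ⟨K ^ 2 + 2 * (1 + δ), by nlinarith [sq_nonneg K], ?_⟩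
  intro C hC
  have hC2 : 2 * (1 + δ) ≤ C := by nlinarith [sq_nonneg K]
  have hC1 : 1 ≤ C := by linarith
  have hKt : K ≤ Real.sqrt C := Real.le_sqrt_of_sq_le (by linarith)
  have htt : Real.sqrt C ^ 2 = C := Real.sq_sqrt (by linarith)
  have ht1 : 1 ≤ Real.sqrt C := Real.le_sqrt_of_sq_le (by linarith)
  set t := Real.sqrt C with ht
  have hR : Real.sqrt (β₂ * (1 + δ) * C + (1 - β₂)) ≤ 2 * (1 + δ) * t := by
    apply Real.sqrt_le_iff.mpr
    refine ⟨by positivity, ?_⟩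
    have h1 : β₂ * ((1 + δ) * C) ≤ 1 * ((1 + δ) * C) :=
      mul_le_mul_of_nonneg_right hb1.le (by positivity)
    have h2 : (2 * (1 + δ) * t) ^ 2 = 4 * (1 + δ) ^ 2 * C := by rw [mul_pow, htt]; ring
    have h3 : 0 ≤ δ * C := by positivity
    have h4 : 0 ≤ δ ^ 2 * C := by positivity
    rw [h2]
    nlinarith
  have hRpos : 0 < Real.sqrt (β₂ * (1 + δ) * C + (1 - β₂)) := by
    apply Real.sqrt_pos.mpr
    have : 0 ≤ β₂ * (1 + δ) * C := by positivity
    linarith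
  set R := Real.sqrt (β₂ * (1 + δ) * C + (1 - β₂)) with hRdef
  have hD : R + ε ≤ (2 * (1 + δ) + ε) * t := by nlinarith
  have hKs : K * s = 2 * (1 + δ) * (2 * (1 + δ) + ε) := by
    rw [hK]; field_simp
  have hmain : (1 + δ) * (R + ε) ≤ (C - δ) * s := by
    have h1 : (1 + δ) * (R + ε) ≤ (1 + δ) * ((2 * (1 + δ) + ε) * t) :=
      mul_le_mul_of_nonneg_left hD (by linarith)
    have h2 : K * (s * t) ≤ t * (s * t) :=
      mul_le_mul_of_nonneg_right hKt (by positivity)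
    have h3 : t * (s * t) = C * s := by rw [← htt]; ring
    have h4 : K * (s * t) = 2 * ((1 + δ) * ((2 * (1 + δ) + ε) * t)) := by
      rw [← mul_assoc, hKs]; ring
    have h5 : C * s ≤ 2 * (C - δ) * s := mul_le_mul_of_nonneg_right (by linarith) hs.le
    linarith
  have hCp : 0 < C + 1 := by linarith
  have hDp : 0 < R + ε := by linarith
  have key : -((1 + δ) / (C + 1)) / s + (1 - (1 + δ) / (C + 1)) / (R + ε)
      = ((C - δ) * s - (1 + δ) * (R + ε)) / ((C + 1) * s * (R + ε)) := by
    field_simp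
    ring
  rw [key]
  exact div_nonneg (by linarith) (by positivity)
end
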